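/- arXiv:2403.17193 — 4 statements merged into one kernel-verified Lean document; each statement's English description precedes it below -/
import Mathlib

section
/- Every nonzero 2-dimensional transposed Leibniz–Poisson algebra (T, ·, [−,−]) over ℂ is isomorphic to one of the following algebras, given on a basis e1, e2 (all unlisted products of basis elements, other than those forced by commutativity of ·, are zero): with · ≡ 0: T1: [e1,e1] = e2; T2: [e1,e2] = e2, [e2,e1] = −e2; and: T3: e1·e1 = e1, e2·e2 = e2, [−,−] ≡ 0; T4: e1·e1 = e1, e1·e2 = e2, [e1,e1] = e2; T5^α (α ∈ ℂ): e1·e1 = e1, e1·e2 = e2, [e1,e2] = α·e2, [e2,e1] = −α·e2; T6: e1·e1 = e1, [−,−] ≡ 0; T7^α (α ∈ ℂ): e1·e1 = e2, [e1,e1] = α·e2; T8: e1·e1 = e2, [e1,e2] = e2, [e2,e1] = −e2. -/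
noncomputable section

/-- The 2-dimensional complex vector space. -/
abbrev V2 : Type := Fin 2 → ℂ

/-- The bilinear multiplication on `V2` determined by a table of structure constants:
`c i j` is the product of the `i`-th and `j`-th basis vectors. -/
def tm (c : Fin 2 → Fin 2 → V2) : V2 → V2 → V2 :=
  fun x y => ∑ i, ∑ j, (x i * y j) • c i j

/-- Multiplication table with the given values of `e1*e1`, `e1*e2`, `e2*e1`, `e2*e2`. -/
def tbl (a b c d : V2) : Fin 2 → Fin 2 → V2 := ![![a, b], ![c, d]]

/-- The zero multiplication on `V2`. -/
def zm : V2 → V2 → V2 := fun _ _ => 0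

/-- Isomorphism of algebras with one multiplication: a ℂ-linear bijection preserving
the multiplication. -/
def Iso1 {A : Type*} [AddCommGroup A] [Module ℂ A] {B : Type*} [AddCommGroup B]
    [Module ℂ B] (μ : A → A → A) (ν : B → B → B) : Prop :=
  ∃ φ : A ≃ₗ[ℂ] B, ∀ x y, φ (μ x y) = ν (φ x) (φ y)

/-- Isomorphism of algebras with two multiplications: a ℂ-linear bijection preserving
both multiplications. -/
def Iso2 {A : Type*} [AddCommGroup A] [Module ℂ A] {B : Type*} [AddCommGroup B]
    [Module ℂ B] (μ₁ μ₂ : A → A → A) (ν₁ ν₂ : B → B → B) : Prop :=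
  ∃ φ : A ≃ₗ[ℂ] B,
    (∀ x y, φ (μ₁ x y) = ν₁ (φ x) (φ y)) ∧ (∀ x y, φ (μ₂ x y) = ν₂ (φ x) (φ y))

/-- The commutative associative algebra A01: `e1·e1 = e1`, `e2·e2 = e2`. -/
def cA01 : Fin 2 → Fin 2 → V2 := tbl ![1,0] 0 0 ![0,1]

/-- The commutative associative algebra A02: `e1·e1 = e1`, `e1·e2 = e2·e1 = e2`. -/
def cA02 : Fin 2 → Fin 2 → V2 := tbl ![1,0] ![0,1] ![0,1] 0

/-- The commutative associative algebra A03: `e1·e1 = e1`. -/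
def cA03 : Fin 2 → Fin 2 → V2 := tbl ![1,0] 0 0 0

/-- The commutative associative algebra A04: `e1·e1 = e2`. -/
def cA04 : Fin 2 → Fin 2 → V2 := tbl ![0,1] 0 0 0

theorem exists_eq_smul_add_smul_of_pair {T : Type*} [AddCommGroup T] [Module ℂ T]
    (hdim : Module.finrank ℂ T = 2) {e f : T} (hl : LinearIndependent ℂ ![e, f]) (v : T) :
    ∃ a b : ℂ, v = a • e + b • f := by
  let B := basisOfLinearIndependentOfCardEqFinrank hl (by simp [hdim])
  refine ⟨B.repr v 0, B.repr v 1, ?_⟩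
  have h := B.sum_repr v
  simp only [Fin.sum_univ_two] at h
  simpa [B] using h.symm

theorem iso2_tm_of_pair {T : Type*} [AddCommGroup T] [Module ℂ T]
    (hdim : Module.finrank ℂ T = 2) {mul br : T →ₗ[ℂ] T →ₗ[ℂ] T} {e f : T}
    (hl : LinearIndependent ℂ ![e, f]) (c d : Fin 2 → Fin 2 → V2)
    (hc : ∀ i j, mul (![e, f] i) (![e, f] j) = c i j 0 • e + c i j 1 • f)
    (hd : ∀ i j, br (![e, f] i) (![e, f] j) = d i j 0 • e + d i j 1 • f) :
    Iso2 (fun x y => mul x y) (fun x y => br x y) (tm c) (tm d) := by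
  let B := basisOfLinearIndependentOfCardEqFinrank hl (by simp [hdim])
  have hB : ∀ i, B i = ![e, f] i := fun i => by simp [B]
  have hBe : B.equivFun e = ![1, 0] := by
    have h0 := hB 0
    simp only [Matrix.cons_val_zero] at h0
    rw [← h0]
    ext i; fin_cases i <;> simp
  have hBf : B.equivFun f = ![0, 1] := by
    have h1 := hB 1
    simp only [Matrix.cons_val_one, Matrix.cons_val_fin_one] at h1
    rw [← h1]
    ext i; fin_cases i <;> simp
  have key : ∀ (m : T →ₗ[ℂ] T →ₗ[ℂ] T) (k : Fin 2 → Fin 2 → V2),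
      (∀ i j, m (![e, f] i) (![e, f] j) = k i j 0 • e + k i j 1 • f) →
      ∀ x y, B.equivFun (m x y) = tm k (B.equivFun x) (B.equivFun y) := by
    intro m k hk x y
    obtain ⟨a, b, rfl⟩ := exists_eq_smul_add_smul_of_pair hdim hl x
    obtain ⟨a', b', rfl⟩ := exists_eq_smul_add_smul_of_pair hdim hl y
    have h00 := hk 0 0
    have h01 := hk 0 1
    have h10 := hk 1 0
    have h11 := hk 1 1
    simp only [Matrix.cons_val_zero, Matrix.cons_val_one, Matrix.cons_val_fin_one]
      at h00 h01 h10 h11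
    simp only [map_add, map_smul, LinearMap.add_apply, LinearMap.smul_apply, h00, h01, h10, h11,
      hBe, hBf, tm]
    ext i
    fin_cases i <;> simp [Fin.sum_univ_two] <;> ring
  exact ⟨B.equivFun, key mul c hc, key br d hd⟩

theorem exists_dual_pair {T : Type*} [AddCommGroup T] [Module ℂ T]
    (hdim : Module.finrank ℂ T = 2) {e f : T} (hl : LinearIndependent ℂ ![e, f]) :
    ∃ E F : T →ₗ[ℂ] ℂ, E e = 1 ∧ E f = 0 ∧ F e = 0 ∧ F f = 1 := by
  let B := basisOfLinearIndependentOfCardEqFinrank hl (by simp [hdim])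
  have h0 : B 0 = e := by simp [B]
  have h1 : B 1 = f := by simp [B]
  refine ⟨B.coord 0, B.coord 1, ?_, ?_, ?_, ?_⟩ <;> simp [← h0, ← h1]

theorem zm_eq_tm : zm = tm (tbl 0 0 0 0) := by
  funext x y
  simp [zm, tm, tbl, Fin.sum_univ_two]

/-- A 2-dimensional commutative associative algebra with some nonzero square either contains a
nonzero idempotent or is generated by an element of nilpotency index three. -/
theorem exists_idempotent_or_nilpotent_generator {T : Type*} [AddCommGroup T] [Module ℂ T]
    (hdim : Module.finrank ℂ T = 2) (mul : T →ₗ[ℂ] T →ₗ[ℂ] T)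
    (hcomm : ∀ x y : T, mul x y = mul y x)
    (hassoc : ∀ x y z : T, mul (mul x y) z = mul x (mul y z))
    (hne : ∃ x, mul x x ≠ 0) :
    (∃ e, e ≠ 0 ∧ mul e e = e) ∨
      ∃ e f, LinearIndependent ℂ ![e, f] ∧ mul e e = f ∧ mul e f = 0 ∧ mul f f = 0 := by
  by_cases h : ∃ x, LinearIndependent ℂ ![x, mul x x]
  · obtain ⟨x, hl⟩ := h
    obtain ⟨y, hy⟩ : ∃ y, y = mul x x := ⟨_, rfl⟩
    rw [← hy] at hl
    obtain ⟨p, q, hpq⟩ := exists_eq_smul_add_smul_of_pair hdim hl (mul x y)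
    have hyx : mul y x = mul x y := hcomm _ _
    have hyy : mul y y = p • y + q • mul x y := by
      conv_lhs => rw [hy]
      rw [hassoc, ← hy, hpq]
      simp [← hy, hpq]
    have hy0 : y ≠ 0 := by simpa using hl.ne_zero 1
    by_cases hp : p = 0
    · by_cases hq : q = 0
      · refine Or.inr ⟨x, y, hl, hy.symm, ?_, ?_⟩ <;> simp [hpq, hyy, hp, hq]
      · refine Or.inl ⟨(q ^ 2)⁻¹ • y, by simp [hq, hy0], ?_⟩
        simp only [map_smul, LinearMap.smul_apply, hyy, hpq, hp]
        match_scalars <;> (field_simp; ring)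
    · refine Or.inl ⟨p⁻¹ • (y - q • x), ?_, ?_⟩
      · intro h0
        have := (hl.eq_of_pair (s := -q * p⁻¹) (t := p⁻¹) (s' := 0) (t' := 0)
          (by rw [← sub_eq_zero, ← h0]; module)).2
        simp [hp] at this
      · simp only [map_smul, map_sub, LinearMap.sub_apply, LinearMap.smul_apply, hyy, hyx, hpq,
          ← hy]
        match_scalars <;> field_simp <;> ring
  · push Not at h
    obtain ⟨x, hx⟩ := hne
    have hx0 : x ≠ 0 := by rintro rfl; simp at hx
    have := h x
    rw [LinearIndependent.pair_iff' hx0] at this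
    push Not at this
    obtain ⟨a, ha⟩ := this
    have ha0 : a ≠ 0 := by rintro rfl; simp [← ha] at hx
    refine Or.inl ⟨a⁻¹ • x, by simp [ha0, hx0], ?_⟩
    simp only [map_smul, LinearMap.smul_apply, ← ha]
    match_scalars
    field_simp

theorem linearIndependent_pair_comb {T : Type*} [AddCommGroup T] [Module ℂ T] {e f : T}
    (hl : LinearIndependent ℂ ![e, f]) (p q r s : ℂ) (h : p * s - q * r ≠ 0) :
    LinearIndependent ℂ ![p • e + q • f, r • e + s • f] := by
  rw [LinearIndependent.pair_iff]
  intro a b hab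
  obtain ⟨h1, h2⟩ := hl.eq_of_pair (s := a * p + b * r) (t := a * q + b * s) (s' := 0) (t' := 0)
    (by rw [zero_smul, zero_smul, add_zero, ← hab]; module)
  constructor
  · apply (mul_eq_zero.mp (_ : a * (p * s - q * r) = 0)).resolve_right h
    linear_combination s * h1 - r * h2
  · apply (mul_eq_zero.mp (_ : b * (p * s - q * r) = 0)).resolve_right h
    linear_combination p * h2 - q * h1

/-- Normal forms of 2-dimensional commutative associative algebras with a nonzero idempotent. -/
theorem exists_normal_pair_of_idempotent {T : Type*} [AddCommGroup T] [Module ℂ T]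
    (hdim : Module.finrank ℂ T = 2) (mul : T →ₗ[ℂ] T →ₗ[ℂ] T)
    (hcomm : ∀ x y : T, mul x y = mul y x)
    (hassoc : ∀ x y z : T, mul (mul x y) z = mul x (mul y z))
    {e : T} (he : e ≠ 0) (hee : mul e e = e) :
    ∃ e f, LinearIndependent ℂ ![e, f] ∧ mul e e = e ∧
      ((mul e f = 0 ∧ mul f f = f) ∨ (mul e f = f ∧ mul f f = 0) ∨
        (mul e f = 0 ∧ mul f f = 0)) := by
  obtain ⟨f, hl⟩ := exists_linearIndependent_pair_of_one_lt_finrank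
    (by omega : 1 < Module.finrank ℂ T) he
  obtain ⟨a, b, hef⟩ := exists_eq_smul_add_smul_of_pair hdim hl (mul e f)
  have h := hassoc e e f
  rw [hee, hef] at h
  simp only [map_add, map_smul, hee, hef] at h
  obtain ⟨h1, h2⟩ := hl.eq_of_pair (s' := a + b * a) (t' := b * b) (h.trans (by module))
  have hb : b * (b - 1) = 0 := by linear_combination -h2
  rcases mul_eq_zero.mp hb with rfl | hb
  · obtain ⟨g, hg⟩ : ∃ g, g = f - a • e := ⟨_, rfl⟩
    have hlg : LinearIndependent ℂ ![e, g] := by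
      convert linearIndependent_pair_comb hl 1 0 (-a) 1 (by simp) using 3 <;> (try rw [hg]) <;> module
    have heg : mul e g = 0 := by simp [hg, hef, hee]
    obtain ⟨r, s, hgg⟩ := exists_eq_smul_add_smul_of_pair hdim hlg (mul g g)
    have h := hassoc e g g
    rw [heg, hgg] at h
    simp only [map_add, map_smul, hee, heg, map_zero, LinearMap.zero_apply] at h
    have hr : r = 0 := by
      simpa [he, eq_comm] using h
    subst hr
    by_cases hs : s = 0
    · exact ⟨e, g, hlg, hee, .inr (.inr ⟨heg, by simp [hgg, hs]⟩)⟩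
    · refine ⟨e, s⁻¹ • g, ?_, hee, .inl ⟨by simp [heg], ?_⟩⟩
      · convert linearIndependent_pair_comb hlg 1 0 0 s⁻¹ (by simp [hs]) using 3 <;> module
      · simp only [map_smul, LinearMap.smul_apply, hgg]
        match_scalars
        · simp
        · field_simp
  · obtain rfl : b = 1 := by linear_combination hb
    obtain rfl : a = 0 := by linear_combination -h1
    have hef : mul e f = f := by simp [hef]
    have hfe : mul f e = f := by rw [hcomm, hef]
    obtain ⟨r, s, hff⟩ := exists_eq_smul_add_smul_of_pair hdim hl (mul f f)
    obtain ⟨t, ht⟩ := IsAlgClosed.exists_pow_nat_eq (r + s ^ 2 / 4) (n := 2) (by norm_num)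
    by_cases ht0 : t = 0
    · have hr : r = - s ^ 2 / 4 := by
        rw [ht0] at ht
        linear_combination -ht
      refine ⟨e, f - (s / 2) • e, ?_, hee, .inr (.inl ⟨by simp [hef, hee], ?_⟩)⟩
      · convert linearIndependent_pair_comb hl 1 0 (-(s / 2)) 1 (by simp) using 3 <;> module
      · simp only [map_sub, map_smul, LinearMap.sub_apply, LinearMap.smul_apply, hee, hef, hfe,
          hff, hr]
        module
    · obtain rfl : r = t ^ 2 - s ^ 2 / 4 := by linear_combination -ht
      refine ⟨(1 / 2 - s / (4 * t)) • e + (1 / (2 * t)) • f,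
        (1 / 2 + s / (4 * t)) • e + (-1 / (2 * t)) • f, ?_, ?_, .inl ⟨?_, ?_⟩⟩
      · refine linearIndependent_pair_comb hl _ _ _ _ ?_
        have : (1 / 2 - s / (4 * t)) * (-1 / (2 * t)) - 1 / (2 * t) * (1 / 2 + s / (4 * t))
            = -1 / (2 * t) := by field_simp; ring
        rw [this]
        simp [ht0]
      all_goals
        simp only [map_add, map_smul, LinearMap.add_apply, LinearMap.smul_apply, hee, hef, hfe,
          hff]
        match_scalars <;> field_simp <;> ring

/-- A nonzero 2-dimensional symmetric Leibniz algebra, with a second commutative multiplication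
whose squares all vanish, is isomorphic to one of two normal forms. -/
theorem iso2_of_forall_square_eq_zero {T : Type*} [AddCommGroup T] [Module ℂ T]
    (hdim : Module.finrank ℂ T = 2) (mul br : T →ₗ[ℂ] T →ₗ[ℂ] T)
    (hcomm : ∀ x y : T, mul x y = mul y x)
    (hleib₁ : ∀ x y z : T, br (br x y) z = br (br x z) y + br x (br y z))
    (hleib₂ : ∀ x y z : T, br x (br y z) = br (br x y) z + br y (br x z))
    (hnz : (∃ x y : T, mul x y ≠ 0) ∨ (∃ x y : T, br x y ≠ 0))
    (hsq : ∀ x, mul x x = 0) :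
    Iso2 (fun x y => mul x y) (fun x y => br x y) zm (tm (tbl ![0,1] 0 0 0)) ∨
    Iso2 (fun x y => mul x y) (fun x y => br x y) zm (tm (tbl 0 ![0,1] ![0,-1] 0)) := by
  have hll : ∀ x, br x (br x x) = 0 := fun x => by simpa using hleib₁ x x x
  have hrr : ∀ x, br (br x x) x = 0 := fun x => by simpa using hleib₂ x x x
  have hmul : ∀ x y, mul x y = 0 := by
    intro x y
    have h := hsq (x + y)
    simp only [map_add, LinearMap.add_apply, hsq, hcomm y x, zero_add, add_zero] at h
    rw [← two_smul ℂ] at h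
    simpa using h
  by_cases hbr : ∃ x, br x x ≠ 0
  · obtain ⟨x, hx⟩ := hbr
    have hx0 : x ≠ 0 := by rintro rfl; simp at hx
    have hl : LinearIndependent ℂ ![x, br x x] := by
      rw [LinearIndependent.pair_iff' hx0]
      intro a ha
      have h := hll x
      rw [← ha, map_smul, smul_eq_zero] at h
      rcases h with rfl | h
      · simp [← ha] at hx
      · exact hx h
    have hyy : br (br x x) (br x x) = 0 := by
      rw [hleib₁, hll]
      simp
    refine .inl ?_
    rw [zm_eq_tm]
    refine iso2_tm_of_pair hdim hl _ _ ?_ ?_ <;> intro i j <;> fin_cases i <;> fin_cases j <;>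
      simp [tbl, hmul, hll, hrr, hyy]
  · push Not at hbr
    have hanti : ∀ x y, br y x = -br x y := by
      intro x y
      have h := hbr (x + y)
      simp only [map_add, LinearMap.add_apply, hbr, zero_add, add_zero] at h
      exact eq_neg_of_add_eq_zero_left (by rw [← h])
    obtain ⟨x, y, hxy⟩ : ∃ x y, br x y ≠ 0 := hnz.resolve_left (by simp [hmul])
    obtain ⟨v, hv⟩ : ∃ v, v = br x y := ⟨_, rfl⟩
    have hv0 : v ≠ 0 := hv ▸ hxy
    obtain ⟨w, hl⟩ := exists_linearIndependent_pair_of_one_lt_finrank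
      (by omega : 1 < Module.finrank ℂ T) hv0
    obtain ⟨p, q, rfl⟩ := exists_eq_smul_add_smul_of_pair hdim hl x
    obtain ⟨p', q', rfl⟩ := exists_eq_smul_add_smul_of_pair hdim hl y
    have hwv : v = (p' * q - p * q') • br w v := by
      conv_lhs => rw [hv]
      simp only [map_add, map_smul, LinearMap.add_apply, LinearMap.smul_apply, hbr,
        hanti w v]
      module
    have hD : p' * q - p * q' ≠ 0 := by
      intro h
      rw [h, zero_smul] at hwv
      exact hv0 hwv
    generalize p' * q - p * q' = D at hwv hD
    have hl' := linearIndependent_pair_comb hl 0 D 1 0 (by simpa using hD)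
    have hvw : D • br v w = -v := by
      rw [hanti w v, smul_neg, ← hwv]
    refine .inr ?_
    rw [zm_eq_tm]
    refine iso2_tm_of_pair hdim hl' _ _ ?_ ?_ <;> intro i j <;> fin_cases i <;> fin_cases j <;>
      simp [tbl, hmul, hbr, hvw, ← hwv]

set_option maxHeartbeats 1000000 in
/-- Every nonzero 2-dimensional transposed Leibniz–Poisson algebra over
ℂ is isomorphic to one of T1, T2 (with `· ≡ 0`), T3, T4, T5^α, T6, T7^α, T8. -/
theorem statement7 (T : Type*) [AddCommGroup T] [Module ℂ T]
    (hdim : Module.finrank ℂ T = 2)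
    (mul br : T →ₗ[ℂ] T →ₗ[ℂ] T)
    (hcomm : ∀ x y : T, mul x y = mul y x)
    (hassoc : ∀ x y z : T, mul (mul x y) z = mul x (mul y z))
    (hleib₁ : ∀ x y z : T, br (br x y) z = br (br x z) y + br x (br y z))
    (hleib₂ : ∀ x y z : T, br x (br y z) = br (br x y) z + br y (br x z))
    (hcompat : ∀ x y z : T, (2 : ℂ) • mul (br x y) z = br (mul x z) y + br x (mul y z))
    (hnz : (∃ x y : T, mul x y ≠ 0) ∨ (∃ x y : T, br x y ≠ 0)) :
    -- T1
    Iso2 (fun x y => mul x y) (fun x y => br x y) zm (tm (tbl ![0,1] 0 0 0)) ∨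
    -- T2
    Iso2 (fun x y => mul x y) (fun x y => br x y) zm (tm (tbl 0 ![0,1] ![0,-1] 0)) ∨
    -- T3
    Iso2 (fun x y => mul x y) (fun x y => br x y) (tm cA01) zm ∨
    -- T4
    Iso2 (fun x y => mul x y) (fun x y => br x y) (tm cA02) (tm (tbl ![0,1] 0 0 0)) ∨
    -- T5^α
    (∃ α : ℂ, Iso2 (fun x y => mul x y) (fun x y => br x y)
      (tm cA02) (tm (tbl 0 ![0,α] ![0,-α] 0))) ∨
    -- T6
    Iso2 (fun x y => mul x y) (fun x y => br x y) (tm cA03) zm ∨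
    -- T7^α
    (∃ α : ℂ, Iso2 (fun x y => mul x y) (fun x y => br x y)
      (tm cA04) (tm (tbl ![0,α] 0 0 0))) ∨
    -- T8
    Iso2 (fun x y => mul x y) (fun x y => br x y) (tm cA04) (tm (tbl 0 ![0,1] ![0,-1] 0)) := by
  have hll : ∀ x, br x (br x x) = 0 := fun x => by simpa using hleib₁ x x x
  by_cases hsq : ∃ x, mul x x ≠ 0
  · obtain ⟨e, f, hl, hcase⟩ : ∃ e f, LinearIndependent ℂ ![e, f] ∧
        ((mul e e = e ∧ mul e f = 0 ∧ mul f f = f) ∨ (mul e e = e ∧ mul e f = f ∧ mul f f = 0) ∨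
          (mul e e = e ∧ mul e f = 0 ∧ mul f f = 0) ∨
          (mul e e = f ∧ mul e f = 0 ∧ mul f f = 0)) := by
      rcases exists_idempotent_or_nilpotent_generator hdim mul hcomm hassoc hsq with
        ⟨e₀, he₀, hee₀⟩ | ⟨e, f, hl, h⟩
      · obtain ⟨e, f, hl, hee, h⟩ :=
          exists_normal_pair_of_idempotent hdim mul hcomm hassoc he₀ hee₀
        exact ⟨e, f, hl, by tauto⟩
      · exact ⟨e, f, hl, by tauto⟩
    have hfe := hcomm f e
    obtain ⟨E, F, hEe, hEf, hFe, hFf⟩ := exists_dual_pair hdim hl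
    obtain ⟨a, b, hbee⟩ := exists_eq_smul_add_smul_of_pair hdim hl (br e e)
    obtain ⟨c, d, hbef⟩ := exists_eq_smul_add_smul_of_pair hdim hl (br e f)
    obtain ⟨c', d', hbfe⟩ := exists_eq_smul_add_smul_of_pair hdim hl (br f e)
    obtain ⟨r, s, hbff⟩ := exists_eq_smul_add_smul_of_pair hdim hl (br f f)
    have k : ∀ {x y : T}, x = y → E x = E y ∧ F x = F y := by rintro x _ rfl; simp
    have k1 := k (hcompat e e e)
    have k2 := k (hcompat e f e)
    have k3 := k (hcompat f e e)
    have k4 := k (hcompat f f e)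
    have k5 := k (hcompat e e f)
    have k6 := k (hcompat e f f)
    have k7 := k (hll e)
    have k8 := k (hll f)
    rcases hcase with ⟨hee, hef, hff⟩ | ⟨hee, hef, hff⟩ | ⟨hee, hef, hff⟩ | ⟨hee, hef, hff⟩ <;>
      rw [hef] at hfe <;>
      simp only [hee, hef, hfe, hff, hbee, hbef, hbfe, hbff, map_add, map_smul, map_zero,
        LinearMap.add_apply, LinearMap.smul_apply, LinearMap.zero_apply, hEe, hEf, hFe, hFf,
        smul_eq_mul, mul_zero, mul_one, add_zero, zero_add]
        at k1 k2 k3 k4 k5 k6 k7 k8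
    · obtain ⟨rfl, rfl, rfl, rfl⟩ : a = 0 ∧ b = 0 ∧ c = 0 ∧ d = 0 := by grind
      obtain ⟨rfl, rfl, rfl, rfl⟩ : c' = 0 ∧ d' = 0 ∧ r = 0 ∧ s = 0 := by grind
      refine .inr (.inr (.inl ?_))
      rw [zm_eq_tm]
      refine iso2_tm_of_pair hdim hl _ _ ?_ ?_ <;> intro i j <;> fin_cases i <;> fin_cases j <;>
        simp [cA01, tbl, hee, hef, hfe, hff, hbee, hbef, hbfe, hbff]
    · obtain ⟨rfl, rfl, rfl, rfl⟩ : a = 0 ∧ c = 0 ∧ c' = 0 ∧ d' = -d := by grind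
      obtain ⟨rfl, rfl, hbd⟩ : r = 0 ∧ s = 0 ∧ b * d = 0 := by grind
      by_cases hb : b = 0
      · subst hb
        refine .inr (.inr (.inr (.inr (.inl ⟨d, ?_⟩))))
        refine iso2_tm_of_pair hdim hl _ _ ?_ ?_ <;> intro i j <;> fin_cases i <;> fin_cases j <;>
          simp [cA02, tbl, hee, hef, hfe, hff, hbee, hbef, hbfe, hbff]
      · obtain rfl : d = 0 := by simpa [hb] using hbd
        refine .inr (.inr (.inr (.inl ?_)))
        have hl' := linearIndependent_pair_comb hl 1 0 0 b (by simp [hb])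
        refine iso2_tm_of_pair hdim hl' _ _ ?_ ?_ <;> intro i j <;> fin_cases i <;>
          fin_cases j <;> simp [cA02, tbl, hee, hef, hfe, hff, hbee, hbef, hbfe, hbff]
    · obtain ⟨rfl, rfl, rfl, rfl⟩ : a = 0 ∧ b = 0 ∧ c = 0 ∧ d = 0 := by grind
      obtain ⟨rfl, rfl, rfl, rfl⟩ : c' = 0 ∧ d' = 0 ∧ r = 0 ∧ s = 0 := by grind
      refine .inr (.inr (.inr (.inr (.inr (.inl ?_)))))
      rw [zm_eq_tm]
      refine iso2_tm_of_pair hdim hl _ _ ?_ ?_ <;> intro i j <;> fin_cases i <;> fin_cases j <;>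
        simp [cA03, tbl, hee, hef, hfe, hff, hbee, hbef, hbfe, hbff]
    · obtain ⟨rfl, rfl, rfl, rfl⟩ : a = 0 ∧ c = 0 ∧ c' = 0 ∧ d' = -d := by grind
      obtain ⟨rfl, rfl, hbd⟩ : r = 0 ∧ s = 0 ∧ b * d = 0 := by grind
      by_cases hd : d = 0
      · subst hd
        refine .inr (.inr (.inr (.inr (.inr (.inr (.inl ⟨b, ?_⟩))))))
        refine iso2_tm_of_pair hdim hl _ _ ?_ ?_ <;> intro i j <;> fin_cases i <;> fin_cases j <;>
          simp [cA04, tbl, hee, hef, hfe, hff, hbee, hbef, hbfe, hbff]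
      · obtain rfl : b = 0 := by simpa [hd] using hbd
        refine .inr (.inr (.inr (.inr (.inr (.inr (.inr ?_))))))
        have hl' := linearIndependent_pair_comb hl d⁻¹ 0 0 (d⁻¹ ^ 2) (by simp [hd])
        refine iso2_tm_of_pair hdim hl' _ _ ?_ ?_ <;> intro i j <;> fin_cases i <;>
          fin_cases j <;> simp [cA04, tbl, smul_smul, hee, hef, hfe, hff, hbee, hbef, hbfe, hbff] <;> congr 1 <;> field_simp
  · push Not at hsq
    rcases iso2_of_forall_square_eq_zero hdim mul br hcomm hleib₁ hleib₂ hnz hsq with h | h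
    · exact .inl h
    · exact .inr (.inl h)
end
end

section
/- Every nonzero 2-dimensional Novikov algebra over ℂ is isomorphic to exactly one of the following algebras, given by a multiplication table on a basis e1, e2 (all unlisted products of basis elements are zero): N01: e1∘e1 = e2; N02: e2∘e1 = −e1; N03: e1∘e1 = e1, e2∘e2 = e2; N04: e1∘e1 = e1; N05: e1∘e2 = e1, e2∘e2 = e1 + e2; N06^γ (γ ∈ ℂ): e1∘e2 = e1, e2∘e1 = γ·e1, e2∘e2 = e2. These algebras are pairwise non-isomorphic, and N06^γ ≅ N06^δ only if γ = δ. -/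
noncomputable section

/-- The nonzero 2-dimensional Novikov algebras N01–N05 and the family N06^γ,
indexed by `Fin 5 ⊕ ℂ`. -/
def novAlg : Fin 5 ⊕ ℂ → Fin 2 → Fin 2 → V2
  | Sum.inl i => ![tbl ![0,1] 0 0 0,          -- N01
                   tbl 0 0 ![-1,0] 0,         -- N02
                   tbl ![1,0] 0 0 ![0,1],     -- N03
                   tbl ![1,0] 0 0 0,          -- N04
                   tbl 0 ![1,0] 0 ![1,1]] i   -- N05
  | Sum.inr γ => tbl 0 ![1,0] ![γ,0] ![0,1]   -- N06^γ

theorem exists_coords_of_iso1_tm {c d : Fin 2 → Fin 2 → V2} (h : Iso1 (tm c) (tm d)) :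
    ∃ φ : Fin 2 → V2, φ 0 0 * φ 1 1 - φ 0 1 * φ 1 0 ≠ 0 ∧
      ∀ i j, c i j 0 • φ 0 + c i j 1 • φ 1 = tm d (φ i) (φ j) := by
  obtain ⟨φ, hφ⟩ := h
  refine ⟨fun i => φ (Pi.single i 1), ?_, fun i j => ?_⟩
  · have hdet :=
      (LinearEquiv.isUnit_det φ (Pi.basisFun ℂ (Fin 2)) (Pi.basisFun ℂ (Fin 2))).ne_zero
    rw [Matrix.det_fin_two] at hdet
    simp only [LinearMap.toMatrix_apply, Pi.basisFun_apply, Pi.basisFun_repr,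
      LinearEquiv.coe_coe] at hdet
    intro h₀
    apply hdet
    linear_combination h₀
  · rw [← hφ, ← map_smul, ← map_smul, ← map_add]
    congr 1
    fin_cases i <;> fin_cases j <;> ext k <;> fin_cases k <;> simp [tm]

set_option maxHeartbeats 1000000 in
theorem eq_of_iso1_novAlg {i j : Fin 5 ⊕ ℂ} (h : Iso1 (tm (novAlg i)) (tm (novAlg j))) :
    i = j := by
  obtain ⟨φ, hdet, h⟩ := exists_coords_of_iso1_tm h
  simp only [funext_iff, Fin.forall_fin_two] at h
  rcases i with i | γ <;> rcases j with j | δ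
  · fin_cases i <;> fin_cases j <;> simp [novAlg, tbl, tm] at h ⊢ <;> grind
  · fin_cases i <;> simp [novAlg, tbl, tm] at h ⊢ <;> grind
  · fin_cases j <;> simp [novAlg, tbl, tm] at h ⊢ <;> grind
  · simp [novAlg, tbl, tm] at h ⊢
    grind

theorem iso1_tm_of_linearIndependent {N : Type*} [AddCommGroup N] [Module ℂ N]
    (hdim : Module.finrank ℂ N = 2) (circ : N →ₗ[ℂ] N →ₗ[ℂ] N) (u : Fin 2 → N)
    (hu : LinearIndependent ℂ u) (c : Fin 2 → Fin 2 → V2)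
    (h : ∀ i j, circ (u i) (u j) = c i j 0 • u 0 + c i j 1 • u 1) :
    Iso1 (fun x y => circ x y) (tm c) := by
  let b := basisOfLinearIndependentOfCardEqFinrank hu (by simp [hdim])
  have hb : ∀ i, b i = u i := fun i => by simp [b]
  have hcirc : ∀ i j, b.equivFun (circ (b i) (b j)) = c i j := fun i j => by
    rw [hb, hb, h, ← hb, ← hb]
    ext k
    fin_cases k <;> simp
  refine ⟨b.equivFun, fun x y => ?_⟩
  conv_lhs => rw [← b.sum_equivFun x, ← b.sum_equivFun y]
  simp only [map_sum, LinearMap.sum_apply, map_smul, LinearMap.smul_apply, hcirc, tm,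
    Finset.smul_sum, smul_smul]
  rw [Finset.sum_comm]
  simp only [mul_comm]

theorem exists_common_eigenvector_of_commute {K V : Type*} [Field K] [IsAlgClosed K]
    [AddCommGroup V] [Module K V] [FiniteDimensional K V] [Nontrivial V]
    {f g : Module.End K V} (h : Commute f g) :
    ∃ v : V, v ≠ 0 ∧ (∃ a : K, f v = a • v) ∧ ∃ b : K, g v = b • v := by
  obtain ⟨a, ha⟩ := Module.End.exists_eigenvalue f
  have : Nontrivial (f.eigenspace a) := Submodule.nontrivial_iff_ne_bot.mpr ha
  obtain ⟨b, hb⟩ := Module.End.exists_eigenvalue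
    (g.restrict (Module.End.mapsTo_genEigenspace_of_comm h a 1))
  obtain ⟨w, hw⟩ := hb.exists_hasEigenvector
  refine ⟨w, by simpa using hw.2, ⟨a, Module.End.mem_eigenspace_iff.mp w.2⟩, b, ?_⟩
  exact congrArg Subtype.val hw.apply_eq_smul

theorem exists_triangular_basis {N : Type*} [AddCommGroup N] [Module ℂ N]
    (hdim : Module.finrank ℂ N = 2) (circ : N →ₗ[ℂ] N →ₗ[ℂ] N)
    (hcomm : ∀ x y z : N, circ (circ x y) z = circ (circ x z) y) :
    ∃ v w : N, LinearIndependent ℂ ![v, w] ∧ ∃ a b c d f g : ℂ,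
      circ v v = a • v ∧ circ v w = b • v ∧ circ w v = c • v + d • w ∧
      circ w w = f • v + g • w := by
  have : FiniteDimensional ℂ N := Module.finite_of_finrank_eq_succ hdim
  have : Nontrivial N := Module.nontrivial_of_finrank_eq_succ hdim
  let β := Module.finBasisOfFinrankEq ℂ N hdim
  obtain ⟨v, hv, ⟨a₀, ha₀⟩, a₁, ha₁⟩ := exists_common_eigenvector_of_commute
    (f := circ.flip (β 0)) (g := circ.flip (β 1))
    (LinearMap.ext fun x => by simp [hcomm x])
  rw [LinearMap.flip_apply] at ha₀ ha₁
  have hline : ∀ y, ∃ a : ℂ, circ v y = a • v := fun y =>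
    ⟨β.repr y 0 * a₀ + β.repr y 1 * a₁, by
      conv_lhs => rw [← β.sum_repr y]
      simp only [Fin.sum_univ_two, map_add, map_smul, ha₀, ha₁, smul_smul, add_smul]⟩
  obtain ⟨w, hw⟩ := exists_linearIndependent_pair_of_one_lt_finrank (R := ℂ) (by omega) hv
  let e := basisOfLinearIndependentOfCardEqFinrank hw (by simp [hdim])
  have hspan : ∀ y, ∃ s t : ℂ, y = s • v + t • w := fun y =>
    ⟨e.repr y 0, e.repr y 1, by
      conv_lhs => rw [← e.sum_repr y]
      simp [e]⟩
  obtain ⟨a, ha⟩ := hline v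
  obtain ⟨b, hb⟩ := hline w
  obtain ⟨c, d, hcd⟩ := hspan (circ w v)
  obtain ⟨f, g, hfg⟩ := hspan (circ w w)
  exact ⟨v, w, hw, a, b, c, d, f, g, ha, hb, hcd, hfg⟩

theorem triangular_relations {N : Type*} [AddCommGroup N] [Module ℂ N]
    (circ : N →ₗ[ℂ] N →ₗ[ℂ] N)
    (hnov₁ : ∀ x y z : N, circ (circ x y) z - circ x (circ y z) =
      circ (circ y x) z - circ y (circ x z))
    (hnov₂ : ∀ x y z : N, circ (circ x y) z = circ (circ x z) y)
    {v w : N} (hvw : LinearIndependent ℂ ![v, w]) {a b c d f g : ℂ}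
    (hvv : circ v v = a • v) (hvw' : circ v w = b • v) (hwv : circ w v = c • v + d • w)
    (hww : circ w w = f • v + g • w) :
    f * (a - d) + c * (g - b) = 0 ∧ a * b - c * a - d * b - d * c = 0 ∧ d * (d - a) = 0 ∧
      b * b - f * a - g * b - d * f = 0 ∧ d * (g - b) = 0 := by
  rw [LinearIndependent.pair_iff] at hvw
  have h₁ := hvw (f * (a - d) + c * (g - b)) 0 (by
    have := hnov₂ w w v
    simp only [hvv, hvw', hwv, hww, map_add, map_smul, LinearMap.add_apply,
      LinearMap.smul_apply] at this
    refine Eq.trans ?_ (sub_eq_zero.mpr this)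
    module)
  have h₂ := hvw (a * b - c * a - d * b - d * c) (d * (a - d)) (by
    have := hnov₁ v w v
    simp only [hvv, hvw', hwv, map_add, map_smul, LinearMap.add_apply,
      LinearMap.smul_apply] at this
    refine Eq.trans ?_ (sub_eq_zero.mpr this)
    module)
  have h₃ := hvw (b * b - f * a - g * b - d * f) (d * (b - g)) (by
    have := hnov₁ v w w
    simp only [hvv, hvw', hwv, hww, map_add, map_smul, LinearMap.add_apply,
      LinearMap.smul_apply] at this
    refine Eq.trans ?_ (sub_eq_zero.mpr this)
    module)
  exact ⟨h₁.1, h₂.1, by linear_combination -h₂.2, h₃.1, by linear_combination -h₃.2⟩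

theorem iso1_tm_of_triangular_coords {N : Type*} [AddCommGroup N] [Module ℂ N]
    (hdim : Module.finrank ℂ N = 2) (circ : N →ₗ[ℂ] N →ₗ[ℂ] N)
    {v w : N} (hvw : LinearIndependent ℂ ![v, w]) {a b c d f g : ℂ}
    (hvv : circ v v = a • v) (hvw' : circ v w = b • v) (hwv : circ w v = c • v + d • w)
    (hww : circ w w = f • v + g • w) (t : Fin 2 → Fin 2 → V2) (u : Fin 2 → V2)
    (hu : u 0 0 * u 1 1 ≠ u 0 1 * u 1 0)
    (h : ∀ i j,
      u i 0 * u j 0 * a + u i 0 * u j 1 * b + u i 1 * u j 0 * c + u i 1 * u j 1 * f =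
        t i j 0 * u 0 0 + t i j 1 * u 1 0 ∧
      u i 1 * u j 0 * d + u i 1 * u j 1 * g = t i j 0 * u 0 1 + t i j 1 * u 1 1) :
    Iso1 (fun x y => circ x y) (tm t) := by
  refine iso1_tm_of_linearIndependent hdim circ (fun i => u i 0 • v + u i 1 • w) ?_ t
    fun i j => ?_
  · have hpair : (fun i => u i 0 • v + u i 1 • w) =
        ![u 0 0 • v + u 0 1 • w, u 1 0 • v + u 1 1 • w] := by
      ext i
      fin_cases i <;> rfl
    rw [hpair]
    exact (LinearIndependent.pair_add_smul_add_smul_iff _ _ _ _).mpr ⟨hvw, hu⟩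
  · obtain ⟨h₀, h₁⟩ := h i j
    simp only [map_add, map_smul, LinearMap.add_apply, LinearMap.smul_apply, hvv, hvw', hwv, hww]
    calc _ = (u i 0 * u j 0 * a + u i 0 * u j 1 * b + u i 1 * u j 0 * c + u i 1 * u j 1 * f) • v
          + (u i 1 * u j 0 * d + u i 1 * u j 1 * g) • w := by module
      _ = _ := by
        rw [h₀, h₁]
        module

theorem exists_novAlg_coords {a b c d f g : ℂ}
    (h₁ : f * (a - d) + c * (g - b) = 0) (h₂ : a * b - c * a - d * b - d * c = 0)
    (h₃ : d * (d - a) = 0) (h₄ : b * b - f * a - g * b - d * f = 0) (h₅ : d * (g - b) = 0)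
    (hnz : ¬(a = 0 ∧ b = 0 ∧ c = 0 ∧ d = 0 ∧ f = 0 ∧ g = 0)) :
    ∃ (k : Fin 5 ⊕ ℂ) (u : Fin 2 → V2), u 0 0 * u 1 1 ≠ u 0 1 * u 1 0 ∧ ∀ i j,
      u i 0 * u j 0 * a + u i 0 * u j 1 * b + u i 1 * u j 0 * c + u i 1 * u j 1 * f =
        novAlg k i j 0 * u 0 0 + novAlg k i j 1 * u 1 0 ∧
      u i 1 * u j 0 * d + u i 1 * u j 1 * g =
        novAlg k i j 0 * u 0 1 + novAlg k i j 1 * u 1 1 := by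
  by_cases hd : d = 0
  swap
  · obtain rfl : d = a := by grind
    obtain rfl : g = b := by grind
    obtain rfl : c = 0 := by grind
    obtain rfl : f = 0 := by grind
    refine ⟨Sum.inr 0, ![![-(g / d), 1], ![1 / d, 0]], by simpa using Ne.symm hd, fun i j => ?_⟩
    fin_cases i <;> fin_cases j <;> simp [novAlg, tbl] <;> grind
  subst hd
  by_cases ha : a = 0
  swap
  · obtain rfl : c = b := by grind
    by_cases hg : g = 0
    · refine ⟨Sum.inl 3, ![![1 / a, 0], ![-(c / a), 1]], by simp [ha], fun i j => ?_⟩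
      fin_cases i <;> fin_cases j <;> simp [novAlg, tbl] <;> grind
    · refine ⟨Sum.inl 2, ![![1 / a, 0], ![-(c / (a * g)), 1 / g]], by simp [ha, hg],
        fun i j => ?_⟩
      fin_cases i <;> fin_cases j <;> simp [novAlg, tbl] <;> grind
  subst ha
  by_cases hbg : b = g
  swap
  · obtain rfl : b = 0 := by grind
    obtain rfl : c = 0 := by grind
    refine ⟨Sum.inl 3, ![![f / g ^ 2, 1 / g], ![1, 0]], by simpa using hbg, fun i j => ?_⟩
    fin_cases i <;> fin_cases j <;> simp [novAlg, tbl]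
    grind
  subst hbg
  by_cases hb : b = 0
  · subst hb
    by_cases hc : c = 0
    · subst hc
      have hf : f ≠ 0 := by grind
      refine ⟨Sum.inl 0, ![![0, 1], ![f, 0]], by simpa using hf.symm, fun i j => ?_⟩
      fin_cases i <;> fin_cases j <;> simp [novAlg, tbl]
    · refine ⟨Sum.inl 1, ![![1, 0], ![f / c ^ 2, -(1 / c)]], by simp [hc], fun i j => ?_⟩
      fin_cases i <;> fin_cases j <;> simp [novAlg, tbl] <;> grind
  by_cases hc : c = 0
  · subst hc
    by_cases hf : f = 0
    · subst hf
      refine ⟨Sum.inr 0, ![![1, 0], ![0, 1 / b]], by simp [hb], fun i j => ?_⟩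
      fin_cases i <;> fin_cases j <;> simp [novAlg, tbl] <;> grind
    · refine ⟨Sum.inl 4, ![![f / b ^ 2, 0], ![0, 1 / b]], by simp [hb, hf], fun i j => ?_⟩
      fin_cases i <;> fin_cases j <;> simp [novAlg, tbl] <;> grind
  · refine ⟨Sum.inr (c / b), ![![1, 0], ![-(f / (b * c)), 1 / b]], by simp [hb],
      fun i j => ?_⟩
    fin_cases i <;> fin_cases j <;> simp [novAlg, tbl] <;> grind

/-- Every nonzero 2-dimensional Novikov algebra over ℂ is isomorphic to
exactly one of N01–N05, N06^γ; these are pairwise non-isomorphic and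
`N06^γ ≅ N06^δ` only if `γ = δ`. -/
theorem statement9 (N : Type*) [AddCommGroup N] [Module ℂ N]
    (hdim : Module.finrank ℂ N = 2)
    (circ : N →ₗ[ℂ] N →ₗ[ℂ] N)
    (hnov₁ : ∀ x y z : N, circ (circ x y) z - circ x (circ y z) =
      circ (circ y x) z - circ y (circ x z))
    (hnov₂ : ∀ x y z : N, circ (circ x y) z = circ (circ x z) y)
    (hnz : ∃ x y : N, circ x y ≠ 0) :
    (∃ i : Fin 5 ⊕ ℂ, Iso1 (fun x y => circ x y) (tm (novAlg i))) ∧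
    (∀ i j : Fin 5 ⊕ ℂ, Iso1 (tm (novAlg i)) (tm (novAlg j)) → i = j) := by
  refine ⟨?_, fun i j => eq_of_iso1_novAlg⟩
  obtain ⟨v, w, hvw, a, b, c, d, f, g, hvv, hvw', hwv, hww⟩ :=
    exists_triangular_basis hdim circ hnov₂
  obtain ⟨h₁, h₂, h₃, h₄, h₅⟩ := triangular_relations circ hnov₁ hnov₂ hvw hvv hvw' hwv hww
  obtain ⟨k, u, hu, h⟩ := exists_novAlg_coords h₁ h₂ h₃ h₄ h₅ <| by
    rintro ⟨rfl, rfl, rfl, rfl, rfl, rfl⟩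
    obtain ⟨x, y, hxy⟩ := hnz
    apply hxy
    let e := basisOfLinearIndependentOfCardEqFinrank hvw (by simp [hdim])
    suffices circ = 0 by simp [this]
    refine e.ext fun i => e.ext fun j => ?_
    fin_cases i <;> fin_cases j <;> simp [e, hvv, hvw', hwv, hww]
  exact ⟨k, iso1_tm_of_triangular_coords hdim circ hvw hvv hvw' hwv hww _ u hu h⟩
end
end

section
/- Every nonzero 2-dimensional Novikov–Poisson algebra (N, ·, ∘) over ℂ is isomorphic to one of the following algebras, given on a basis e1, e2 (all unlisted products of basis elements, other than those forced by commutativity of ·, are zero): with · ≡ 0: the Novikov algebras N01: e1∘e1 = e2; N02: e2∘e1 = −e1; N03: e1∘e1 = e1, e2∘e2 = e2; N04: e1∘e1 = e1; N05: e1∘e2 = e1, e2∘e2 = e1 + e2; N06^γ: e1∘e2 = e1, e2∘e1 = γ·e1, e2∘e2 = e2; and (α, β ∈ ℂ): N07^{α,β}: e1·e1 = e1, e2·e2 = e2, e1∘e1 = α·e1, e2∘e2 = β·e2; N08^{α,β}: e1·e1 = e1, e1·e2 = e2, e1∘e1 = α·e1 + e2, e1∘e2 = β·e2, e2∘e1 =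 α·e2; N09^{α,β}: e1·e1 = e1, e1·e2 = e2, e1∘e1 = α·e1, e1∘e2 = β·e2, e2∘e1 = α·e2; N10^α: e1·e1 = e1, e1∘e1 = α·e1, e2∘e2 = e2; N11^α: e1·e1 = e1, e1∘e1 = α·e1; N12^α: e1·e1 = e2, e1∘e1 = α·e1, e1∘e2 = e2, e2∘e1 = α·e2; N13^α: e1·e1 = e2, e1∘e1 = e1 + α·e2, e2∘e1 = e2; N14^α: e1·e1 = e2, e1∘e1 = α·e2. Moreover, the only nontrivial isomorphism among the listed algebras N07–N14 is N07^{α,β} ≅ N07^{β,α}. -/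
noncomputable section

/-- Index of the Novikov–Poisson algebras N07–N14 with nontrivial commutative
associative multiplication. -/
inductive NPIdx : Type
  | n07 (α β : ℂ)
  | n08 (α β : ℂ)
  | n09 (α β : ℂ)
  | n10 (α : ℂ)
  | n11 (α : ℂ)
  | n12 (α : ℂ)
  | n13 (α : ℂ)
  | n14 (α : ℂ)

/-- The commutative associative multiplication of N07–N14. -/
def npMul : NPIdx → Fin 2 → Fin 2 → V2
  | .n07 _ _ => cA01
  | .n08 _ _ => cA02
  | .n09 _ _ => cA02
  | .n10 _ => cA03
  | .n11 _ => cA03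
  | .n12 _ => cA04
  | .n13 _ => cA04
  | .n14 _ => cA04

/-- The Novikov multiplication of N07–N14. -/
def npCirc : NPIdx → Fin 2 → Fin 2 → V2
  | .n07 α β => tbl ![α,0] 0 0 ![0,β]
  | .n08 α β => tbl ![α,1] ![0,β] ![0,α] 0
  | .n09 α β => tbl ![α,0] ![0,β] ![0,α] 0
  | .n10 α => tbl ![α,0] 0 0 ![0,1]
  | .n11 α => tbl ![α,0] 0 0 0
  | .n12 α => tbl ![α,0] ![0,1] ![0,α] 0
  | .n13 α => tbl ![1,α] 0 ![0,1] 0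
  | .n14 α => tbl ![0,α] 0 0 0

theorem tm_apply (c : Fin 2 → Fin 2 → V2) (x y : V2) (k : Fin 2) :
    tm c x y k = x 0 * y 0 * c 0 0 k + x 0 * y 1 * c 0 1 k +
      (x 1 * y 0 * c 1 0 k + x 1 * y 1 * c 1 1 k) := by
  simp [tm, Fin.sum_univ_two]

theorem tm_single (c : Fin 2 → Fin 2 → V2) (i j : Fin 2) :
    tm c (Pi.single i 1) (Pi.single j 1) = c i j := by
  ext k
  fin_cases i <;> fin_cases j <;> simp [tm_apply]

theorem linearEquiv_apply_V2 (φ : V2 ≃ₗ[ℂ] V2) (x : V2) (k : Fin 2) :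
    φ x k = x 0 * φ (Pi.single 0 1) k + x 1 * φ (Pi.single 1 1) k := by
  have hx : x = x 0 • Pi.single 0 1 + x 1 • Pi.single 1 1 := by
    ext k
    fin_cases k <;> simp
  conv_lhs => rw [hx]
  simp

/-- An isomorphism between two algebras given by structure constants, in coordinates: `P i` is
the image of the `i`-th basis vector. -/
theorem Iso2.exists_coords {c d c' d' : Fin 2 → Fin 2 → V2}
    (h : Iso2 (tm c) (tm d) (tm c') (tm d')) :
    ∃ P : Fin 2 → V2, P 0 0 * P 1 1 - P 0 1 * P 1 0 ≠ 0 ∧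
      (∀ i j k, c i j 0 * P 0 k + c i j 1 * P 1 k = tm c' (P i) (P j) k) ∧
      (∀ i j k, d i j 0 * P 0 k + d i j 1 * P 1 k = tm d' (P i) (P j) k) := by
  obtain ⟨φ, h₁, h₂⟩ := h
  refine ⟨fun i => φ (Pi.single i 1), ?_, fun i j k => ?_, fun i j k => ?_⟩
  · intro hdet
    have h1 := linearEquiv_apply_V2 φ (φ.symm (Pi.single 0 1))
    have h2 := linearEquiv_apply_V2 φ (φ.symm (Pi.single 1 1))
    simp only [LinearEquiv.apply_symm_apply] at h1 h2
    have h10 := h1 0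
    have h11 := h1 1
    have h20 := h2 0
    have h21 := h2 1
    simp at h10 h11 h20 h21
    grind
  · rw [← h₁, tm_single, ← linearEquiv_apply_V2]
  · rw [← h₂, tm_single, ← linearEquiv_apply_V2]

set_option maxHeartbeats 800000 in
theorem NPIdx.eq_or_swap_of_iso2 (i j : NPIdx)
    (h : Iso2 (tm (npMul i)) (tm (npCirc i)) (tm (npMul j)) (tm (npCirc j))) :
    i = j ∨ ∃ α β : ℂ, i = .n07 α β ∧ j = .n07 β α := by
  obtain ⟨P, hdet, h₁, h₂⟩ := h.exists_coords
  simp only [tm_apply] at h₁ h₂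
  simp only [Fin.forall_fin_two] at h₁ h₂
  generalize P 0 0 = p, P 0 1 = q, P 1 0 = r, P 1 1 = s at *
  cases i <;> cases j <;>
  simp [npMul, npCirc, cA01, cA02, cA03, cA04, tbl] at h₁ h₂ ⊢ <;> grind

section Classification

variable {N : Type*} [AddCommGroup N] [Module ℂ N]

/-- The multiplication `f` has structure constants `c` with respect to the basis `b`. -/
def HasTable (b : Module.Basis (Fin 2) ℂ N) (f : N →ₗ[ℂ] N →ₗ[ℂ] N)
    (c : Fin 2 → Fin 2 → V2) : Prop :=
  ∀ i j, f (b i) (b j) = c i j 0 • b 0 + c i j 1 • b 1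

theorem HasTable.equivFun_basis {b : Module.Basis (Fin 2) ℂ N} {f : N →ₗ[ℂ] N →ₗ[ℂ] N}
    {c : Fin 2 → Fin 2 → V2} (h : HasTable b f c) (i j : Fin 2) :
    b.equivFun (f (b i) (b j)) = c i j := by
  ext k
  rw [h i j]
  fin_cases k <;> simp

theorem HasTable.equivFun_apply {b : Module.Basis (Fin 2) ℂ N} {f : N →ₗ[ℂ] N →ₗ[ℂ] N}
    {c : Fin 2 → Fin 2 → V2} (h : HasTable b f c) (x y : N) :
    b.equivFun (f x y) = tm c (b.equivFun x) (b.equivFun y) := by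
  conv_lhs => rw [← b.sum_equivFun x, ← b.sum_equivFun y]
  simp only [map_sum, map_smul, LinearMap.sum_apply, LinearMap.smul_apply, h.equivFun_basis, tm,
    Finset.smul_sum, smul_smul]
  rw [Finset.sum_comm]
  simp only [mul_comm]

theorem HasTable.iso2 {b : Module.Basis (Fin 2) ℂ N} {f g : N →ₗ[ℂ] N →ₗ[ℂ] N}
    {c d : Fin 2 → Fin 2 → V2} (hf : HasTable b f c) (hg : HasTable b g d) :
    Iso2 (fun x y => f x y) (fun x y => g x y) (tm c) (tm d) :=
  ⟨b.equivFun, hf.equivFun_apply, hg.equivFun_apply⟩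

theorem hasTable_tbl {b : Module.Basis (Fin 2) ℂ N} {f : N →ₗ[ℂ] N →ₗ[ℂ] N} {u v w z : V2}
    (h00 : f (b 0) (b 0) = u 0 • b 0 + u 1 • b 1) (h01 : f (b 0) (b 1) = v 0 • b 0 + v 1 • b 1)
    (h10 : f (b 1) (b 0) = w 0 • b 0 + w 1 • b 1) (h11 : f (b 1) (b 1) = z 0 • b 0 + z 1 • b 1) :
    HasTable b f (tbl u v w z) := by
  intro i j
  fin_cases i <;> fin_cases j <;> simpa [tbl]

theorem exists_basis_of_det_ne_zero (b : Module.Basis (Fin 2) ℂ N) (p q r s : ℂ)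
    (h : p * s - q * r ≠ 0) :
    ∃ b' : Module.Basis (Fin 2) ℂ N,
      b' 0 = p • b 0 + q • b 1 ∧ b' 1 = r • b 0 + s • b 1 := by
  have hli : LinearIndependent ℂ ![p • b 0 + q • b 1, r • b 0 + s • b 1] := by
    rw [LinearIndependent.pair_iff]
    intro x y hxy
    have hb := LinearIndependent.pair_iff.1
      (show LinearIndependent ℂ ![b 0, b 1] by
        convert b.linearIndependent using 1
        ext i; fin_cases i <;> rfl)
      (x * p + y * r) (x * q + y * s) (by rw [← hxy]; module)
    obtain ⟨h1, h2⟩ := hb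
    constructor
    · refine (mul_eq_zero.1 (?_ : (p * s - q * r) * x = 0)).resolve_left h
      linear_combination s * h1 - r * h2
    · refine (mul_eq_zero.1 (?_ : (p * s - q * r) * y = 0)).resolve_left h
      linear_combination p * h2 - q * h1
  have hcard : Fintype.card (Fin 2) = Module.finrank ℂ N := (Module.finrank_eq_card_basis b).symm
  exact ⟨basisOfLinearIndependentOfCardEqFinrank hli hcard, by simp, by simp⟩

theorem exists_basis_extending (hdim : Module.finrank ℂ N = 2) {v : N} (hv : v ≠ 0) :
    ∃ b : Module.Basis (Fin 2) ℂ N, b 0 = v := by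
  have := Module.finite_of_finrank_eq_succ hdim
  obtain ⟨w, hw⟩ := exists_linearIndependent_pair_of_one_lt_finrank (R := ℂ)
    (show 1 < Module.finrank ℂ N by omega) hv
  exact ⟨basisOfLinearIndependentOfCardEqFinrank hw (by simp [hdim]), by simp⟩

theorem exists_common_eigenvector (hdim : Module.finrank ℂ N = 2) (A B : N →ₗ[ℂ] N)
    (hAB : ∀ x, A (B x) = B (A x)) :
    ∃ v : N, v ≠ 0 ∧ ∃ p q : ℂ, A v = p • v ∧ B v = q • v := by
  have := Module.finite_of_finrank_eq_succ hdim
  have : Nontrivial N := Module.nontrivial_of_finrank_eq_succ hdim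
  obtain ⟨p, hp⟩ := Module.End.exists_eigenvalue A
  obtain ⟨v, hv⟩ := hp.exists_hasEigenvector
  by_cases hli : LinearIndependent ℂ ![v, B v]
  · obtain ⟨q, hq⟩ := Module.End.exists_eigenvalue B
    obtain ⟨w, hw⟩ := hq.exists_hasEigenvector
    have hA : A = p • LinearMap.id := by
      refine (basisOfLinearIndependentOfCardEqFinrank hli (by simp [hdim])).ext fun i => ?_
      fin_cases i
      · simpa using hv.apply_eq_smul
      · simp [hAB, hv.apply_eq_smul]
    exact ⟨w, hw.2, p, q, by simp [hA], hw.apply_eq_smul⟩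
  · rw [LinearIndependent.pair_iff' hv.2] at hli
    push Not at hli
    obtain ⟨q, hq⟩ := hli
    exact ⟨v, hv.2, p, q, hv.apply_eq_smul, hq.symm⟩

/-- A Novikov algebra of dimension two has a basis whose first vector spans a right ideal; the
Novikov identities then become polynomial identities for the structure constants. -/
theorem exists_basis_structure_constants (hdim : Module.finrank ℂ N = 2)
    (f : N →ₗ[ℂ] N →ₗ[ℂ] N)
    (hl : ∀ x y z : N, f (f x y) z - f x (f y z) = f (f y x) z - f y (f x z))
    (hr : ∀ x y z : N, f (f x y) z = f (f x z) y) :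
    ∃ (b : Module.Basis (Fin 2) ℂ N) (p q r s t u : ℂ),
      HasTable b f (tbl ![p, 0] ![q, 0] ![r, s] ![t, u]) ∧
      s * (s - p) = 0 ∧ s * (u - q) = 0 ∧ q * p - r * p - s * q = r * s ∧
      q * q - t * p - u * q = s * t ∧ r * q + s * t = t * p + u * r := by
  have := Module.finite_of_finrank_eq_succ hdim
  let b₀ := Module.finBasisOfFinrankEq ℂ N hdim
  obtain ⟨v, hv, p₀, q₀, hp, hq⟩ := exists_common_eigenvector hdim (f.flip (b₀ 0)) (f.flip (b₀ 1))
    (fun x => by simpa using hr x (b₀ 1) (b₀ 0))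
  obtain ⟨b, rfl⟩ := exists_basis_extending hdim hv
  have hb : ∀ x : N, x = b.repr x 0 • b 0 + b.repr x 1 • b 1 := fun x => by
    rw [← Fin.sum_univ_two (fun i => b.repr x i • b i), b.sum_repr]
  have hb₀ : ∀ x : N, x = b₀.repr x 0 • b₀ 0 + b₀.repr x 1 • b₀ 1 := fun x => by
    rw [← Fin.sum_univ_two (fun i => b₀.repr x i • b₀ i), b₀.sum_repr]
  have h0 : ∀ x, ∃ c : ℂ, f (b 0) x = c • b 0 := fun x => by
    refine ⟨b₀.repr x 0 * p₀ + b₀.repr x 1 * q₀, ?_⟩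
    simp only [LinearMap.flip_apply] at hp hq
    conv_lhs => rw [hb₀ x]
    rw [map_add, map_smul, map_smul, hp, hq]
    module
  obtain ⟨p, e00⟩ := h0 (b 0)
  obtain ⟨q, e01⟩ := h0 (b 1)
  obtain ⟨r, s, e10⟩ : ∃ r s : ℂ, f (b 1) (b 0) = r • b 0 + s • b 1 := ⟨_, _, hb _⟩
  obtain ⟨t, u, e11⟩ : ∃ t u : ℂ, f (b 1) (b 1) = t • b 0 + u • b 1 := ⟨_, _, hb _⟩
  have h1 := congrArg b.repr (hl (b 0) (b 1) (b 0))
  have h2 := congrArg b.repr (hl (b 0) (b 1) (b 1))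
  have h3 := congrArg b.repr (hr (b 1) (b 0) (b 1))
  simp only [e00, e01, e10, e11, map_add, map_sub, map_smul, LinearMap.add_apply,
    LinearMap.smul_apply, Module.Basis.repr_self] at h1 h2 h3
  have h10 := DFunLike.congr_fun h1 0
  have h11 := DFunLike.congr_fun h1 1
  have h20 := DFunLike.congr_fun h2 0
  have h21 := DFunLike.congr_fun h2 1
  have h30 := DFunLike.congr_fun h3 0
  simp at h10 h11 h20 h21 h30
  refine ⟨b, p, q, r, s, t, u, hasTable_tbl (by simpa) (by simpa) (by simpa) (by simpa),
    ?_, ?_, ?_, ?_, ?_⟩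
  · linear_combination -h11
  · linear_combination -h21
  · linear_combination h10
  · linear_combination h20
  · linear_combination h30

/-- Change of basis: the rows of `P` are the coordinates of a new basis, with respect to which
every multiplication with structure constants `c` gets the structure constants `c'`. -/
theorem exists_basis_change (b : Module.Basis (Fin 2) ℂ N) (P : Fin 2 → V2)
    (hP : P 0 0 * P 1 1 - P 0 1 * P 1 0 ≠ 0) :
    ∃ b' : Module.Basis (Fin 2) ℂ N, ∀ (f : N →ₗ[ℂ] N →ₗ[ℂ] N) (c c' : Fin 2 → Fin 2 → V2),
      HasTable b f c →
      (∀ i j k, tm c (P i) (P j) k = c' i j 0 * P 0 k + c' i j 1 * P 1 k) →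
      HasTable b' f c' := by
  obtain ⟨b', h0, h1⟩ := exists_basis_of_det_ne_zero b _ _ _ _ hP
  have hb' : ∀ i, b.equivFun (b' i) = P i := by
    intro i
    ext k
    fin_cases i <;> fin_cases k <;> simp [h0, h1]
  refine ⟨b', fun f c c' hf h i j => b.equivFun.injective ?_⟩
  ext k
  rw [hf.equivFun_apply, hb', hb', h, map_add, map_smul, map_smul, hb', hb']
  rfl

theorem HasTable.change {b : Module.Basis (Fin 2) ℂ N} {f : N →ₗ[ℂ] N →ₗ[ℂ] N}
    {c : Fin 2 → Fin 2 → V2} (hf : HasTable b f c) (c' : Fin 2 → Fin 2 → V2) (P : Fin 2 → V2)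
    (hP : P 0 0 * P 1 1 - P 0 1 * P 1 0 ≠ 0)
    (h : ∀ i j k, tm c (P i) (P j) k = c' i j 0 * P 0 k + c' i j 1 * P 1 k) :
    ∃ b' : Module.Basis (Fin 2) ℂ N, HasTable b' f c' :=
  (exists_basis_change b P hP).imp fun _ hb' => hb' f c c' hf h

theorem HasTable.ne_zero {b : Module.Basis (Fin 2) ℂ N} {f : N →ₗ[ℂ] N →ₗ[ℂ] N}
    {c : Fin 2 → Fin 2 → V2} (hf : HasTable b f c) (h : ∃ x y, f x y ≠ 0) : c ≠ 0 := by
  rintro rfl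
  obtain ⟨x, y, hxy⟩ := h
  refine hxy (b.equivFun.injective ?_)
  ext k
  rw [hf.equivFun_apply]
  simp [tm]

/-- Every nonzero two-dimensional Novikov algebra is one of N01–N06. -/
theorem exists_hasTable_novAlg (hdim : Module.finrank ℂ N = 2) (f : N →ₗ[ℂ] N →ₗ[ℂ] N)
    (hl : ∀ x y z : N, f (f x y) z - f x (f y z) = f (f y x) z - f y (f x z))
    (hr : ∀ x y z : N, f (f x y) z = f (f x z) y) (hne : ∃ x y, f x y ≠ 0) :
    ∃ (i : Fin 5 ⊕ ℂ) (b : Module.Basis (Fin 2) ℂ N), HasTable b f (novAlg i) := by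
  obtain ⟨b, p, q, r, s, t, u, hf, e1, e2, e3, e4, e5⟩ :=
    exists_basis_structure_constants hdim f hl hr
  have hne := hf.ne_zero hne
  by_cases hs : s = 0
  · subst hs
    by_cases hp : p = 0
    · subst hp
      by_cases hu : u = 0
      · obtain rfl : q = 0 := by grind
        subst hu
        by_cases hr0 : r = 0
        · subst hr0
          have ht : t ≠ 0 := by
            rintro rfl
            refine hne ?_
            ext i j k
            fin_cases i <;> fin_cases j <;> fin_cases k <;> simp [tbl]
          refine ⟨.inl 0, hf.change _ ![![0, 1], ![t, 0]] ?_ ?_⟩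
          · simpa using ht
          · simp [Fin.forall_fin_two, tm_apply, novAlg, tbl]
        · refine ⟨.inl 1, hf.change _ ![![1, 0], ![t / r ^ 2, -1 / r]] ?_ ?_⟩
          · simp [hr0]
          · simp [Fin.forall_fin_two, tm_apply, novAlg, tbl]
            field_simp
            simp
      · by_cases hq : q = 0
        · subst hq
          obtain rfl : r = 0 := by grind
          refine ⟨.inl 3, hf.change _ ![![t / u ^ 2, 1 / u], ![1, 0]] ?_ ?_⟩
          · simp [hu]
          · simp [Fin.forall_fin_two, tm_apply, novAlg, tbl]
            field_simp
            simp
        · obtain rfl : u = q := by grind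
          by_cases hr0 : r = 0
          · subst hr0
            by_cases ht : t = 0
            · subst ht
              refine ⟨.inr 0, hf.change _ ![![1, 0], ![0, 1 / u]] ?_ ?_⟩
              · simp [hu]
              · simp [Fin.forall_fin_two, tm_apply, novAlg, tbl]
                field_simp
                simp
            · refine ⟨.inl 4, hf.change _ ![![t / u ^ 2, 0], ![0, 1 / u]] ?_ ?_⟩
              · simp [hu, ht]
              · simp [Fin.forall_fin_two, tm_apply, novAlg, tbl]
                field_simp
                simp
          · refine ⟨.inr (r / u), hf.change _ ![![1, 0], ![-t / (u * r), 1 / u]] ?_ ?_⟩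
            · simp [hu]
            · simp [Fin.forall_fin_two, tm_apply, novAlg, tbl]
              field_simp
              simp
              ring
    · obtain rfl : q = r := by grind
      have ht : t = (q * q - u * q) / p := by grind
      subst ht
      by_cases hu : u = 0
      · subst hu
        refine ⟨.inl 3, hf.change _ ![![1 / p, 0], ![-q / p, 1]] ?_ ?_⟩
        · simp [hp]
        · simp [Fin.forall_fin_two, tm_apply, novAlg, tbl]
          field_simp
          simp
      · refine ⟨.inl 2, hf.change _ ![![1 / p, 0], ![-q / (p * u), 1 / u]] ?_ ?_⟩
        · simp [hp, hu]
        · simp [Fin.forall_fin_two, tm_apply, novAlg, tbl]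
          field_simp
          simp
          ring
  · obtain rfl : s = p := by grind
    obtain rfl : u = q := by grind
    obtain rfl : r = 0 := by grind
    obtain rfl : t = 0 := by grind
    refine ⟨.inr 0, hf.change _ ![![-u / s, 1], ![1 / s, 0]] ?_ ?_⟩
    · simp [hs]
    · simp [Fin.forall_fin_two, tm_apply, novAlg, tbl]
      field_simp
      simp

theorem exists_hasTable_comm_assoc (hdim : Module.finrank ℂ N = 2) (f : N →ₗ[ℂ] N →ₗ[ℂ] N)
    (hcomm : ∀ x y : N, f x y = f y x) (hassoc : ∀ x y z : N, f (f x y) z = f x (f y z))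
    (hne : ∃ x y, f x y ≠ 0) :
    ∃ b : Module.Basis (Fin 2) ℂ N, HasTable b f cA01 ∨ HasTable b f cA02 ∨
      HasTable b f cA03 ∨ HasTable b f cA04 := by
  obtain ⟨i, b, hf⟩ := exists_hasTable_novAlg hdim f (fun x y z => by simp [hassoc])
    (fun x y z => by rw [hassoc, hcomm y z, ← hassoc]) hne
  have h01 : novAlg i 0 1 0 = novAlg i 1 0 0 := by
    rw [← hf.equivFun_basis, ← hf.equivFun_basis, hcomm]
  rcases i with i | γ
  · fin_cases i
    · exact ⟨b, .inr <| .inr <| .inr hf⟩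
    · simp [novAlg, tbl] at h01
    · exact ⟨b, .inl hf⟩
    · exact ⟨b, .inr <| .inr <| .inl hf⟩
    · simp [novAlg, tbl] at h01
  · obtain rfl : γ = 1 := by simpa [novAlg, tbl, eq_comm] using h01
    obtain ⟨b', hb'⟩ := hf.change cA02 ![![0, 1], ![1, 0]] (by simp)
      (by simp [Fin.forall_fin_two, tm_apply, novAlg, tbl, cA02])
    exact ⟨b', .inr <| .inl hb'⟩

/-- Every two-dimensional Novikov–Poisson algebra with `· ≠ 0` is one of N07–N14. -/
theorem exists_hasTable_npMul_npCirc (hdim : Module.finrank ℂ N = 2)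
    (mul circ : N →ₗ[ℂ] N →ₗ[ℂ] N)
    (hcomm : ∀ x y : N, mul x y = mul y x)
    (hassoc : ∀ x y z : N, mul (mul x y) z = mul x (mul y z))
    (hcompat₁ : ∀ x y z : N, circ (mul x y) z = mul x (circ y z))
    (hcompat₂ : ∀ x y z : N, mul (circ x y) z - mul (circ y x) z =
      circ x (mul y z) - circ y (mul x z))
    (hne : ∃ x y, mul x y ≠ 0) :
    ∃ (i : NPIdx) (b : Module.Basis (Fin 2) ℂ N),
      HasTable b mul (npMul i) ∧ HasTable b circ (npCirc i) := by
  obtain ⟨b, hb⟩ := exists_hasTable_comm_assoc hdim mul hcomm hassoc hne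
  obtain ⟨d, hd⟩ : ∃ d, HasTable b circ d := ⟨fun i j => b.equivFun (circ (b i) (b j)),
    fun i j => by
      rw [← Fin.sum_univ_two (fun k => b.equivFun (circ (b i) (b j)) k • b k), b.sum_equivFun]⟩
  have hcoords : ∀ c, HasTable b mul c →
      (∀ i j k l, tm d (c i j) (Pi.single k 1) l = tm c (Pi.single i 1) (d j k) l) ∧
      (∀ i j k l, tm c (d i j) (Pi.single k 1) l - tm c (d j i) (Pi.single k 1) l =
        tm d (Pi.single i 1) (c j k) l - tm d (Pi.single j 1) (c i k) l) := by
    intro c hc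
    have hsingle : ∀ i, b.equivFun (b i) = Pi.single i 1 := fun i => by
      ext k
      simp [Module.Basis.equivFun_self, Pi.single_apply, eq_comm]
    constructor
    · intro i j k l
      have := congrFun (congrArg b.equivFun (hcompat₁ (b i) (b j) (b k))) l
      simpa only [hc.equivFun_apply, hd.equivFun_apply, hsingle, tm_single] using this
    · intro i j k l
      have := congrFun (congrArg b.equivFun (hcompat₂ (b i) (b j) (b k))) l
      simpa only [map_sub, Pi.sub_apply, hc.equivFun_apply, hd.equivFun_apply, hsingle, tm_single] using this
  have hchange : ∀ (c : Fin 2 → Fin 2 → V2) (i : NPIdx) (P : Fin 2 → V2), HasTable b mul c →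
      P 0 0 * P 1 1 - P 0 1 * P 1 0 ≠ 0 →
      (∀ j k l, tm c (P j) (P k) l = npMul i j k 0 * P 0 l + npMul i j k 1 * P 1 l) →
      (∀ j k l, tm d (P j) (P k) l = npCirc i j k 0 * P 0 l + npCirc i j k 1 * P 1 l) →
      ∃ (i : NPIdx) (b : Module.Basis (Fin 2) ℂ N),
        HasTable b mul (npMul i) ∧ HasTable b circ (npCirc i) := by
    intro c i P hc hP h₁ h₂
    obtain ⟨b', hb'⟩ := exists_basis_change b P hP
    exact ⟨i, b', hb' mul c _ hc h₁, hb' circ d _ hd h₂⟩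
  rcases hb with hb | hb | hb | hb
  all_goals
    obtain ⟨h₁, h₂⟩ := hcoords _ hb
    simp [Fin.forall_fin_two, tm_apply, cA01, cA02, cA03, cA04, tbl] at h₁ h₂
    replace hchange := fun i P => hchange _ i P hb
  · refine hchange (.n07 (d 0 0 0) (d 1 1 1)) ![![1, 0], ![0, 1]] ?_ ?_ ?_ <;>
      simp [Fin.forall_fin_two, tm_apply, npMul, npCirc, tbl, cA01]
    grind
  · by_cases hδ : d 0 0 1 = 0
    · refine hchange (.n09 (d 0 0 0) (d 0 1 1)) ![![1, 0], ![0, 1]] ?_ ?_ ?_ <;>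
        simp [Fin.forall_fin_two, tm_apply, npMul, npCirc, tbl, cA02]
      grind
    · refine hchange (.n08 (d 0 0 0) (d 0 1 1)) ![![1, 0], ![0, d 0 0 1]] ?_ ?_ ?_ <;>
        simp [Fin.forall_fin_two, tm_apply, npMul, npCirc, tbl, cA02, hδ]
      grind
  · by_cases hδ : d 1 1 1 = 0
    · refine hchange (.n11 (d 0 0 0)) ![![1, 0], ![0, 1]] ?_ ?_ ?_ <;>
        simp [Fin.forall_fin_two, tm_apply, npMul, npCirc, tbl, cA03]
      grind
    · refine hchange (.n10 (d 0 0 0)) ![![1, 0], ![0, 1 / d 1 1 1]] ?_ ?_ ?_ <;>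
        simp [Fin.forall_fin_two, tm_apply, npMul, npCirc, tbl, cA03, hδ]
      grind
  · by_cases hβ : d 0 1 1 = 0
    · by_cases hγ : d 0 0 0 = 0
      · refine hchange (.n14 (d 0 0 1)) ![![1, 0], ![0, 1]] ?_ ?_ ?_ <;>
          simp [Fin.forall_fin_two, tm_apply, npMul, npCirc, tbl, cA04]
        grind
      · refine hchange (.n13 (d 0 0 1)) ![![1 / d 0 0 0, 0], ![0, 1 / d 0 0 0 ^ 2]] ?_ ?_ ?_ <;>
          simp [Fin.forall_fin_two, tm_apply, npMul, npCirc, tbl, cA04, hγ]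
        all_goals grind
    · refine hchange (.n12 (d 0 0 0 / d 0 1 1))
        ![![1 / d 0 1 1, -d 0 0 1 / d 0 1 1 ^ 2], ![0, 1 / d 0 1 1 ^ 2]] ?_ ?_ ?_ <;>
        simp [Fin.forall_fin_two, tm_apply, npMul, npCirc, tbl, cA04, hβ]
      all_goals grind

end Classification

theorem iso2_n07_swap (α β : ℂ) : Iso2 (tm (npMul (.n07 α β))) (tm (npCirc (.n07 α β)))
    (tm (npMul (.n07 β α))) (tm (npCirc (.n07 β α))) := by
  refine ⟨LinearEquiv.funCongrLeft ℂ ℂ (Equiv.swap 0 1), fun x y => ?_, fun x y => ?_⟩ <;>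
  · ext k
    fin_cases k <;>
      simp [LinearMap.funLeft_apply, tm_apply, npMul, npCirc, cA01, tbl]

/-- Every nonzero 2-dimensional Novikov–Poisson algebra over ℂ is
isomorphic to one of the Novikov algebras N01–N06^γ (with `· ≡ 0`) or to one of
N07–N14; moreover the only nontrivial isomorphism among N07–N14 is
`N07^{α,β} ≅ N07^{β,α}`. -/
theorem statement10 (N : Type*) [AddCommGroup N] [Module ℂ N]
    (hdim : Module.finrank ℂ N = 2)
    (mul circ : N →ₗ[ℂ] N →ₗ[ℂ] N)
    (hcomm : ∀ x y : N, mul x y = mul y x)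
    (hassoc : ∀ x y z : N, mul (mul x y) z = mul x (mul y z))
    (hnov₁ : ∀ x y z : N, circ (circ x y) z - circ x (circ y z) =
      circ (circ y x) z - circ y (circ x z))
    (hnov₂ : ∀ x y z : N, circ (circ x y) z = circ (circ x z) y)
    (hcompat₁ : ∀ x y z : N, circ (mul x y) z = mul x (circ y z))
    (hcompat₂ : ∀ x y z : N, mul (circ x y) z - mul (circ y x) z =
      circ x (mul y z) - circ y (mul x z))
    (hnz : (∃ x y : N, mul x y ≠ 0) ∨ (∃ x y : N, circ x y ≠ 0)) :
    ((∃ i : Fin 5 ⊕ ℂ, Iso2 (fun x y => mul x y) (fun x y => circ x y)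
        zm (tm (novAlg i))) ∨
     (∃ i : NPIdx, Iso2 (fun x y => mul x y) (fun x y => circ x y)
        (tm (npMul i)) (tm (npCirc i)))) ∧
    (∀ α β : ℂ, Iso2 (tm (npMul (.n07 α β))) (tm (npCirc (.n07 α β)))
        (tm (npMul (.n07 β α))) (tm (npCirc (.n07 β α)))) ∧
    (∀ i j : NPIdx, Iso2 (tm (npMul i)) (tm (npCirc i)) (tm (npMul j)) (tm (npCirc j)) →
        i = j ∨ ∃ α β : ℂ, i = .n07 α β ∧ j = .n07 β α) := by
  refine ⟨?_, iso2_n07_swap, NPIdx.eq_or_swap_of_iso2⟩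
  by_cases hmul : ∃ x y : N, mul x y ≠ 0
  · obtain ⟨i, b, hm, hc⟩ :=
      exists_hasTable_npMul_npCirc hdim mul circ hcomm hassoc hcompat₁ hcompat₂ hmul
    exact .inr ⟨i, hm.iso2 hc⟩
  · obtain ⟨i, b, hb⟩ := exists_hasTable_novAlg hdim circ hnov₁ hnov₂ (hnz.resolve_left hmul)
    push Not at hmul
    exact .inl ⟨i, b.equivFun, fun x y => by simp [hmul, zm], hb.equivFun_apply⟩
end
end

section
/- Let (P, ·) be a nonzero 2-dimensional commutative associative algebra over ℂ and let θ : P × P → P be a bilinear map. Then θ satisfies the three conditions (i) θ(θ(x,y),z) − θ(x,θ(y,z)) = θ(θ(y,x),z) − θ(y,θ(x,z)), (ii) θ(x,y)·z − θ(y,x)·z = θ(x, y·z) − θ(y, x·z), (iii) θ(x·y, z) = x·θ(y,z), for all x, y, z ∈ P, if and only if θ satisfies (i), (ii), (iii) together with the additional condition θ(θ(x,y),z) = θ(θ(x,z),y) for all x, y, z ∈ P. (Equivalently, the set of pre-Lie Poisson cocycles on (P, ·) equals the set of Novikov–Poisson cocycles on (P, ·).) -/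
open Module in
/-- In a plane, a linearly independent pair spans. -/
theorem LinearIndependent.exists_smul_add_smul_eq_of_finrank_eq_two {K V : Type*} [Field K]
    [AddCommGroup V] [Module K V] (hdim : finrank K V = 2) {v w : V}
    (h : LinearIndependent K ![v, w]) (u : V) : ∃ a b : K, a • v + b • w = u := by
  have hspan := h.span_eq_top_of_card_eq_finrank (by simp [hdim])
  rw [Matrix.range_cons_cons_empty] at hspan
  exact Submodule.mem_span_pair.mp (hspan ▸ Submodule.mem_top)

/-- Two endomorphisms of a plane commute if both commute with an endomorphism admitting a cyclic
vector. -/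
theorem Module.End.commute_of_commute_of_linearIndependent {K V : Type*} [Field K]
    [AddCommGroup V] [Module K V] (hdim : Module.finrank K V = 2) {M R S : Module.End K V}
    {v : V} (hv : LinearIndependent K ![v, M v]) (hR : Commute R M) (hS : Commute S M) :
    Commute R S := by
  have hRM (u : V) : R (M u) = M (R u) := LinearMap.congr_fun hR u
  have hSM (u : V) : S (M u) = M (S u) := LinearMap.congr_fun hS u
  obtain ⟨a, b, hab⟩ := hv.exists_smul_add_smul_eq_of_finrank_eq_two hdim (R v)
  obtain ⟨c, d, hcd⟩ := hv.exists_smul_add_smul_eq_of_finrank_eq_two hdim (S v)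
  have key : R (S v) = S (R v) := by
    rw [← hab, ← hcd]
    simp only [map_add, map_smul, hRM, hSM]
    rw [← hab, ← hcd]
    simp only [map_add, map_smul]
    module
  refine LinearMap.ext fun u => ?_
  obtain ⟨p, q, rfl⟩ := hv.exists_smul_add_smul_eq_of_finrank_eq_two hdim u
  simp only [Module.End.mul_apply, map_add, map_smul, hRM, hSM, key]

/-- A nonzero commutative multiplication on a plane has a multiplication operator with a cyclic
vector. -/
theorem LinearMap.exists_linearIndependent_pair_of_comm {K V : Type*} [Field K]
    [AddCommGroup V] [Module K V] (hdim : Module.finrank K V = 2) (mul : V →ₗ[K] V →ₗ[K] V)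
    (hcomm : ∀ x y, mul x y = mul y x) (hnz : ∃ x y, mul x y ≠ 0) :
    ∃ x v, LinearIndependent K ![v, mul x v] := by
  by_contra! hdep
  have hscal (x v : V) (hv : v ≠ 0) : ∃ c : K, c • v = mul x v := by
    simpa [LinearIndependent.pair_iff' hv] using hdep x v
  have hindep (x y : V) (h : LinearIndependent K ![x, y]) : mul x y = 0 := by
    obtain ⟨c, hc⟩ := hscal y x (h.ne_zero 0)
    obtain ⟨d, hd⟩ := hscal x y (h.ne_zero 1)
    have hz : c • x + (-d) • y = 0 := by rw [neg_smul, hc, hd, hcomm y x, add_neg_cancel]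
    rw [hcomm, ← hc, (LinearIndependent.pair_iff.mp h c (-d) hz).1, zero_smul]
  obtain ⟨x, y, hxy⟩ := hnz
  have hx : x ≠ 0 := by
    rintro rfl
    simp at hxy
  obtain ⟨w, hw⟩ := exists_linearIndependent_pair_of_one_lt_finrank (R := K)
    (by rw [hdim]; exact one_lt_two) hx
  have hxw := hindep x w hw
  have hadd : LinearIndependent K ![x, x + w] := by
    rw [LinearIndependent.pair_iff] at hw ⊢
    intro s t hst
    obtain ⟨h1, rfl⟩ := hw (s + t) t (by rw [← hst]; module)
    exact ⟨by simpa using h1, rfl⟩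
  have hxx : mul x x = 0 := by simpa [hxw] using hindep x (x + w) hadd
  obtain ⟨a, b, rfl⟩ := hw.exists_smul_add_smul_eq_of_finrank_eq_two hdim y
  exact hxy (by simp [hxx, hxw])


/-- Let `(P, ·)` be a nonzero 2-dimensional commutative associative
algebra over ℂ and let `θ : P × P → P` be a bilinear map.  Then `θ` satisfies the
pre-Lie Poisson cocycle conditions (i), (ii), (iii) if and only if it satisfies them
together with the additional Novikov condition `θ(θ(x,y),z) = θ(θ(x,z),y)`. -/
theorem statement11 (P : Type*) [AddCommGroup P] [Module ℂ P]
    (hdim : Module.finrank ℂ P = 2)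
    (mul : P →ₗ[ℂ] P →ₗ[ℂ] P)
    (hcomm : ∀ x y : P, mul x y = mul y x)
    (hassoc : ∀ x y z : P, mul (mul x y) z = mul x (mul y z))
    (hnz : ∃ x y : P, mul x y ≠ 0)
    (θ : P →ₗ[ℂ] P →ₗ[ℂ] P) :
    ((∀ x y z : P, θ (θ x y) z - θ x (θ y z) = θ (θ y x) z - θ y (θ x z)) ∧
     (∀ x y z : P, mul (θ x y) z - mul (θ y x) z = θ x (mul y z) - θ y (mul x z)) ∧
     (∀ x y z : P, θ (mul x y) z = mul x (θ y z))) ↔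
    ((∀ x y z : P, θ (θ x y) z - θ x (θ y z) = θ (θ y x) z - θ y (θ x z)) ∧
     (∀ x y z : P, mul (θ x y) z - mul (θ y x) z = θ x (mul y z) - θ y (mul x z)) ∧
     (∀ x y z : P, θ (mul x y) z = mul x (θ y z)) ∧
     (∀ x y z : P, θ (θ x y) z = θ (θ x z) y)) := by
  refine ⟨fun ⟨h1, h2, h3⟩ => ⟨h1, h2, h3, fun x y z => ?_⟩,
    fun ⟨h1, h2, h3, _⟩ => ⟨h1, h2, h3⟩⟩
  obtain ⟨m, v, hv⟩ := mul.exists_linearIndependent_pair_of_comm hdim hcomm hnz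
  have hmul (w : P) : Commute (θ.flip w : Module.End ℂ P) (mul m) :=
    LinearMap.ext fun u => h3 m u w
  exact LinearMap.congr_fun
    (Module.End.commute_of_commute_of_linearIndependent hdim hv (hmul z) (hmul y)) x
end
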